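/- Suppose there exist a diagonal positive definite Q ∈ ℝ^{n×n}, a diagonal positive definite S ∈ ℝ^{m×m}, a symmetric positive definite Γ̂ ∈ ℝ^{n×n}, scalars μ, α > 0, and W ∈ ℝ^{m×n} such that: (D1) [[−QΛ⁻¹, HQ + BW, BS],[(HQ + BW)ᵀ, −e^{−μ}ΛQ, −Wᵀ],[(BS)ᵀ, −W, −2S]] is negative semidefinite; (D2) [[Γ̂, N],[Nᵀ, I]] is positive semidefinite; (D3) Q(αI − μΛ) + Γ̂ is negative semidefinite. Set K := WQ⁻¹ and H_cl := H + BK. Then for every T₀ > 0, every continuously differentiable X : [0,T₀] × [0,1] → ℝⁿ and continuous d : [0,T₀] × [0,1] → ℝ^q satisfying ∂ₜX(t,z) + Λ ∂_zX(t,z) = N d(t,z) on [0,T₀] × [0,1] and X(t,0) = H_cl X(t,1) + Bφ(K X(t,1)) for all t ∈ [0,T₀], one has for all t ∈ [0,T₀]: (∫₀¹ |X(t,z)|² dz)^{1/2} ≤ √(λ_max(Q)/λ_min(Q))·e^{μ/2}·e^{−(α/2)t}·(∫₀¹ |X(0,z)|² dz)^{1/2} + √(λ_max(Q))·e^{μ/2}·(∫₀ᵗ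 ∫₀¹ |d(θ,z)|² dz dθ)^{1/2}. -/

import Mathlib

open Matrix Set

/-- Componentwise saturation function with saturation levels `ubar`. -/
noncomputable def saturate {m : ℕ} (ubar : Fin m → ℝ) (u : Fin m → ℝ) : Fin m → ℝ :=
  fun i => min |u i| (ubar i) * Real.sign (u i)

/-- Dead-zone nonlinearity `φ(u) = σ(u) - u`. -/
noncomputable def deadzone {m : ℕ} (ubar : Fin m → ℝ) (u : Fin m → ℝ) : Fin m → ℝ :=
  saturate ubar u - u

/-- The Euclidean norm on `ℝ^q`. -/
noncomputable def enorm' {q : ℕ} (x : Fin q → ℝ) : ℝ := Real.sqrt (∑ i, (x i) ^ 2)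

/-!
The Lyapunov functional `V(X) = ∫₀¹ e^{-μz} Xᵀ Q⁻¹ X dz` is dissipated at rate `α`, up to the supply
`∫₀¹ |d|² dz`. Along a solution its integrand obeys a balance law with flux `e^{-μz} Xᵀ Λ Q⁻¹ X`.
Testing (D1) on `(Λ Q⁻¹ X(t,0), Q⁻¹ X(t,1), S⁻¹ φ)` and using the sector condition
`φᵢ (φᵢ + uᵢ) ≤ 0` of the dead zone shows that the outgoing flux at `z = 1` dominates the incoming
flux at `z = 0`; testing (D2) and (D3) on `Q⁻¹ X` bounds the interior terms. Grönwall's inequality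
gives `V(X(t)) ≤ e^{-αt} V(X(0)) + ∫₀ᵗ ∫₀¹ |d|²`, and comparing `V` with the `L²` norm through the
extreme eigenvalues of `Q` costs the factors `λ_max(Q) e^μ` and `λ_min(Q)⁻¹` before taking roots.
-/

theorem deadzone_mul_deadzone_add_self_nonpos {m : ℕ} {ubar : Fin m → ℝ} {i : Fin m}
    (hubar : 0 ≤ ubar i) (u : Fin m → ℝ) : deadzone ubar u i * (deadzone ubar u i + u i) ≤ 0 := by
  simp only [deadzone, saturate, Pi.sub_apply, sub_add_cancel]
  rcases lt_trichotomy (u i) 0 with hu | hu | hu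
  · rw [Real.sign_of_neg hu, abs_of_neg hu]
    cases min_cases (-u i) (ubar i) <;> nlinarith
  · simp [hu]
  · rw [Real.sign_of_pos hu, abs_of_pos hu]
    cases min_cases (u i) (ubar i) <;> nlinarith

theorem enorm'_sq {q : ℕ} (x : Fin q → ℝ) : enorm' x ^ 2 = x ⬝ᵥ x := by
  rw [enorm', Real.sq_sqrt (Finset.sum_nonneg fun i _ => sq_nonneg (x i))]
  simp only [dotProduct, sq]

theorem posDef_of_isDiag {ι : Type*} {A : Matrix ι ι ℝ} (hA : A.IsDiag) (h_pos : ∀ i, 0 < A i i) :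
    A.PosDef := by
  classical
  rw [← hA.diagonal_diag]
  exact posDef_diagonal_iff.2 h_pos

variable {ι κ η : Type*} [Fintype ι] [Fintype κ] [Fintype η]

section QuadraticForm

theorem dotProduct_self_nonneg (x : ι → ℝ) : 0 ≤ x ⬝ᵥ x :=
  Finset.sum_nonneg fun i _ => mul_self_nonneg (x i)

theorem dotProduct_mulVec_comm_of_isSymm {A : Matrix ι ι ℝ} (hA : A.IsSymm) (x y : ι → ℝ) :
    x ⬝ᵥ A *ᵥ y = y ⬝ᵥ A *ᵥ x := by
  rw [← dotProduct_transpose_mulVec, hA.eq]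

theorem commute_of_isDiag {A B : Matrix ι ι ℝ} (hA : A.IsDiag) (hB : B.IsDiag) : Commute A B := by
  classical
  rw [← hA.diagonal_diag, ← hB.diagonal_diag]
  exact commute_diagonal _ _

theorem sumElim_dotProduct_fromBlocks_mulVec_sumElim (A : Matrix ι ι ℝ) (B : Matrix ι κ ℝ)
    (D : Matrix κ κ ℝ) (x : ι → ℝ) (y : κ → ℝ) :
    Sum.elim x y ⬝ᵥ fromBlocks A B Bᵀ D *ᵥ Sum.elim x y =
      x ⬝ᵥ A *ᵥ x + 2 * (x ⬝ᵥ B *ᵥ y) + y ⬝ᵥ D *ᵥ y := by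
  simp only [fromBlocks_mulVec, sumElim_dotProduct_sumElim, Sum.elim_comp_inl, Sum.elim_comp_inr,
    dotProduct_add, dotProduct_transpose_mulVec]
  ring

theorem two_mul_dotProduct_mulVec_le_of_fromBlocks_posSemidef [DecidableEq η] {Γ : Matrix ι ι ℝ}
    {N : Matrix ι η ℝ} (h : (fromBlocks Γ N Nᵀ (1 : Matrix η η ℝ)).PosSemidef)
    (v : ι → ℝ) (d : η → ℝ) : 2 * (v ⬝ᵥ N *ᵥ d) ≤ v ⬝ᵥ Γ *ᵥ v + d ⬝ᵥ d := by
  have h_nonneg := h.dotProduct_mulVec_nonneg (Sum.elim v (-d))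
  rw [star_trivial, sumElim_dotProduct_fromBlocks_mulVec_sumElim, mulVec_neg, one_mulVec,
    dotProduct_neg, neg_dotProduct_neg] at h_nonneg
  linarith

variable [DecidableEq ι]

theorem mul_dotProduct_self_le_of_le_spectrum {A : Matrix ι ι ℝ} (hA : A.IsHermitian) {c : ℝ}
    (hc : ∀ r ∈ spectrum ℝ A, c ≤ r) (x : ι → ℝ) : c * (x ⬝ᵥ x) ≤ x ⬝ᵥ A *ᵥ x := by
  have h_psd : (A - algebraMap ℝ _ c).PosSemidef := by
    refine posSemidef_iff_isHermitian_and_spectrum_nonneg.2 ⟨hA.sub ?_, ?_⟩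
    · simp [algebraMap_eq_diagonal]
    · rw [← spectrum.sub_singleton_eq]
      rintro _ ⟨r, hr, _, rfl, rfl⟩
      exact sub_nonneg.2 (hc r hr)
  have h_nonneg := h_psd.dotProduct_mulVec_nonneg x
  rwa [star_trivial, sub_mulVec, dotProduct_sub, Algebra.algebraMap_eq_smul_one, smul_mulVec,
    one_mulVec, dotProduct_smul, smul_eq_mul, sub_nonneg] at h_nonneg

theorem dotProduct_mulVec_le_of_spectrum_le {A : Matrix ι ι ℝ} (hA : A.IsHermitian) {c : ℝ}
    (hc : ∀ r ∈ spectrum ℝ A, r ≤ c) (x : ι → ℝ) : x ⬝ᵥ A *ᵥ x ≤ c * (x ⬝ᵥ x) := by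
  have h_neg := mul_dotProduct_self_le_of_le_spectrum hA.neg (c := -c)
    (fun r hr => neg_le.2 (hc (-r) (by rwa [← Set.mem_neg, spectrum.neg_eq]))) x
  rw [neg_mulVec, dotProduct_neg, neg_mul] at h_neg
  exact neg_le_neg_iff.1 h_neg

theorem exists_eigenvalues_inv_eq_of_mem_spectrum_inv {Q : Matrix ι ι ℝ} (hQ : Q.PosDef) {r : ℝ}
    (hr : r ∈ spectrum ℝ Q⁻¹) : ∃ i, (hQ.isHermitian.eigenvalues i)⁻¹ = r := by
  obtain ⟨u, rfl⟩ := hQ.isUnit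
  rw [← coe_units_inv] at hr
  have h_inv := spectrum.inv₀_mem_iff.2 hr
  rw [hQ.isHermitian.spectrum_real_eq_range_eigenvalues] at h_inv
  obtain ⟨i, hi⟩ := h_inv
  exact ⟨i, by rw [hi, inv_inv]⟩

theorem dotProduct_inv_mulVec_le {Q : Matrix ι ι ℝ} (hQ : Q.PosDef) (x : ι → ℝ) :
    x ⬝ᵥ Q⁻¹ *ᵥ x ≤ (⨅ i, hQ.isHermitian.eigenvalues i)⁻¹ * (x ⬝ᵥ x) := by
  refine dotProduct_mulVec_le_of_spectrum_le hQ.inv.isHermitian (fun r hr => ?_) x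
  obtain ⟨i, rfl⟩ := exists_eigenvalues_inv_eq_of_mem_spectrum_inv hQ hr
  have : Nonempty ι := ⟨i⟩
  obtain ⟨j, hj⟩ := exists_eq_ciInf_of_finite (f := hQ.isHermitian.eigenvalues)
  exact inv_anti₀ (hj ▸ hQ.eigenvalues_pos j) (ciInf_le (finite_range _).bddBelow i)

theorem dotProduct_self_le_mul_dotProduct_inv_mulVec {Q : Matrix ι ι ℝ} (hQ : Q.PosDef)
    (x : ι → ℝ) : x ⬝ᵥ x ≤ (⨆ i, hQ.isHermitian.eigenvalues i) * (x ⬝ᵥ Q⁻¹ *ᵥ x) := by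
  cases isEmpty_or_nonempty ι with
  | inl _ => simp
  | inr h_ne =>
    have h_le_iSup (i) := le_ciSup (finite_range hQ.isHermitian.eigenvalues).bddAbove i
    have h_iSup_pos := (hQ.eigenvalues_pos h_ne.some).trans_le (h_le_iSup _)
    rw [← inv_mul_le_iff₀ h_iSup_pos]
    refine mul_dotProduct_self_le_of_le_spectrum hQ.inv.isHermitian (fun r hr => ?_) x
    obtain ⟨i, rfl⟩ := exists_eigenvalues_inv_eq_of_mem_spectrum_inv hQ hr
    exact inv_anti₀ (hQ.eigenvalues_pos i) (h_le_iSup i)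

theorem range_eigenvalues_of_isDiag {A : Matrix ι ι ℝ} (hA : A.IsHermitian) (h_diag : A.IsDiag) :
    range hA.eigenvalues = range fun i => A i i := by
  calc range hA.eigenvalues = spectrum ℝ A := hA.spectrum_real_eq_range_eigenvalues.symm
    _ = spectrum ℝ (diagonal A.diag) := by rw [h_diag.diagonal_diag]
    _ = range fun i => A i i := spectrum_diagonal _

end QuadraticForm

section MatrixInequalities

/-- The block matrix of the boundary inequality (D1), with `ρ` in place of `e^{-μ}`. -/
noncomputable def boundaryMatrix [DecidableEq ι] (Λ H Q : Matrix ι ι ℝ) (B : Matrix ι κ ℝ)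
    (W : Matrix κ ι ℝ) (S : Matrix κ κ ℝ) (ρ : ℝ) : Matrix ((ι ⊕ ι) ⊕ κ) ((ι ⊕ ι) ⊕ κ) ℝ :=
  fromBlocks
    (fromBlocks
      (-(Q * Λ⁻¹)) (H * Q + B * W)
      (H * Q + B * W)ᵀ (-(ρ • (Λ * Q))))
    (fromRows (B * S) (-Wᵀ))
    (fromCols (B * S)ᵀ (-W))
    (-(2 • S))

variable [DecidableEq ι] {Λ H Q Γ : Matrix ι ι ℝ} {B : Matrix ι κ ℝ} {N : Matrix ι η ℝ}
  {W : Matrix κ ι ℝ} {S : Matrix κ κ ℝ}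

theorem dotProduct_boundaryMatrix_mulVec (Λ H Q : Matrix ι ι ℝ) (B : Matrix ι κ ℝ)
    (W : Matrix κ ι ℝ) (S : Matrix κ κ ℝ) (ρ : ℝ) (a b : ι → ℝ) (c : κ → ℝ) :
    Sum.elim (Sum.elim a b) c ⬝ᵥ boundaryMatrix Λ H Q B W S ρ *ᵥ Sum.elim (Sum.elim a b) c =
      2 * (a ⬝ᵥ ((H * Q + B * W) *ᵥ b + (B * S) *ᵥ c)) -
        (a ⬝ᵥ (Q * Λ⁻¹) *ᵥ a + ρ * (b ⬝ᵥ (Λ * Q) *ᵥ b) + 2 * (c ⬝ᵥ (W *ᵥ b + S *ᵥ c))) := by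
  have h_row : fromCols (B * S)ᵀ (-W) = (fromRows (B * S) (-Wᵀ))ᵀ := by
    rw [transpose_fromRows, transpose_neg, transpose_transpose]
  rw [boundaryMatrix, h_row, sumElim_dotProduct_fromBlocks_mulVec_sumElim,
    sumElim_dotProduct_fromBlocks_mulVec_sumElim, fromRows_mulVec, sumElim_dotProduct_sumElim]
  simp only [two_nsmul, neg_mulVec, add_mulVec, smul_mulVec, dotProduct_neg, dotProduct_add,
    dotProduct_smul, dotProduct_transpose_mulVec, smul_eq_mul]
  ring

theorem dotProduct_boundary_flux_le {ρ : ℝ} (hΛ : Λ.IsSymm) (hΛ_unit : IsUnit Λ) (hQ : IsUnit Q)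
    (hS : S.IsDiag) (hS_pos : ∀ i, 0 < S i i)
    (h_psd : (-boundaryMatrix Λ H Q B W S ρ).PosSemidef) {x₀ x₁ : ι → ℝ} {w : κ → ℝ}
    (hw : ∀ i, w i * (w i + ((W * Q⁻¹) *ᵥ x₁) i) ≤ 0)
    (hx₀ : x₀ = (H + B * (W * Q⁻¹)) *ᵥ x₁ + B *ᵥ w) :
    x₀ ⬝ᵥ (Λ * Q⁻¹) *ᵥ x₀ ≤ ρ * (x₁ ⬝ᵥ (Λ * Q⁻¹) *ᵥ x₁) := by
  classical
  rw [isUnit_iff_isUnit_det] at hΛ_unit hQ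
  set a := (Λ * Q⁻¹) *ᵥ x₀ with ha
  set b := Q⁻¹ *ᵥ x₁ with hb
  let c : κ → ℝ := fun i => (S i i)⁻¹ * w i
  have hQb : Q *ᵥ b = x₁ := by rw [hb, mulVec_mulVec, mul_nonsing_inv Q hQ, one_mulVec]
  have hSc : S *ᵥ c = w := by
    ext i
    rw [← hS.diagonal_diag, mulVec_diagonal, diag_apply, mul_inv_cancel_left₀ (hS_pos i).ne']
  have h_cross : (H * Q + B * W) *ᵥ b + (B * S) *ᵥ c = x₀ := by
    simp only [hx₀, add_mulVec, ← mulVec_mulVec, hQb, hSc, ← hb]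
  have h_inflow : a ⬝ᵥ (Q * Λ⁻¹) *ᵥ a = a ⬝ᵥ x₀ := by
    rw [ha, mulVec_mulVec, Matrix.mul_assoc Q, nonsing_inv_mul_cancel_left _ _ hΛ_unit,
      mul_nonsing_inv Q hQ, one_mulVec]
  have h_outflow : b ⬝ᵥ (Λ * Q) *ᵥ b = x₁ ⬝ᵥ (Λ * Q⁻¹) *ᵥ x₁ := by
    rw [← mulVec_mulVec, hQb, dotProduct_mulVec_comm_of_isSymm hΛ, ← mulVec_mulVec]
  have h_sector : c ⬝ᵥ (W *ᵥ b + S *ᵥ c) ≤ 0 := by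
    rw [hSc, hb, mulVec_mulVec, add_comm]
    refine Finset.sum_nonpos fun i _ => ?_
    rw [Pi.add_apply, mul_assoc]
    exact mul_nonpos_of_nonneg_of_nonpos (inv_pos.2 (hS_pos i)).le (hw i)
  have h_form := h_psd.dotProduct_mulVec_nonneg (Sum.elim (Sum.elim a b) c)
  rw [star_trivial, neg_mulVec, dotProduct_neg, dotProduct_boundaryMatrix_mulVec, h_cross,
    h_inflow, h_outflow] at h_form
  rw [dotProduct_comm x₀]
  linarith

theorem dotProduct_interior_supply_le [DecidableEq η] {μ α : ℝ} (hQ_symm : Q.IsSymm)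
    (hQ : IsUnit Q) (h_dist : (fromBlocks Γ N Nᵀ (1 : Matrix η η ℝ)).PosSemidef)
    (h_decay : (-(Q * (α • (1 : Matrix ι ι ℝ) - μ • Λ) + Γ)).PosSemidef)
    (x : ι → ℝ) (d : η → ℝ) :
    2 * (x ⬝ᵥ Q⁻¹ *ᵥ (N *ᵥ d)) ≤
      μ * (x ⬝ᵥ (Λ * Q⁻¹) *ᵥ x) - α * (x ⬝ᵥ Q⁻¹ *ᵥ x) + d ⬝ᵥ d := by
  rw [isUnit_iff_isUnit_det] at hQ
  set v := Q⁻¹ *ᵥ x with hv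
  have hQv : Q *ᵥ v = x := by rw [hv, mulVec_mulVec, mul_nonsing_inv Q hQ, one_mulVec]
  have h_work : x ⬝ᵥ Q⁻¹ *ᵥ (N *ᵥ d) = v ⬝ᵥ N *ᵥ d := by
    rw [dotProduct_mulVec_comm_of_isSymm (by rw [IsSymm, transpose_nonsing_inv, hQ_symm.eq]),
      dotProduct_comm]
  have h_storage : v ⬝ᵥ (Q * (α • (1 : Matrix ι ι ℝ) - μ • Λ)) *ᵥ v =
      α * (x ⬝ᵥ v) - μ * (x ⬝ᵥ (Λ * Q⁻¹) *ᵥ x) := by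
    rw [← mulVec_mulVec, dotProduct_mulVec_comm_of_isSymm hQ_symm, hQv, dotProduct_comm,
      ← mulVec_mulVec, sub_mulVec, smul_mulVec, smul_mulVec, one_mulVec, dotProduct_sub,
      dotProduct_smul, dotProduct_smul, smul_eq_mul, smul_eq_mul]
  have h_form := h_decay.dotProduct_mulVec_nonneg v
  rw [star_trivial, neg_mulVec, dotProduct_neg, add_mulVec, dotProduct_add, h_storage] at h_form
  have := two_mul_dotProduct_mulVec_le_of_fromBlocks_posSemidef h_dist v d
  linarith

end MatrixInequalities

section ParametricIntegral

open MeasureTheory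

variable {𝓧 E : Type*} [TopologicalSpace 𝓧] [NormedAddCommGroup E] {a b : ℝ}

theorem continuousOn_slice_of_continuousOn_prod {K : Set 𝓧} {F : 𝓧 → ℝ → E} {u : Set ℝ}
    (hF : ContinuousOn (fun p : 𝓧 × ℝ => F p.1 p.2) (K ×ˢ u)) {x : 𝓧} (hx : x ∈ K) :
    ContinuousOn (F x) u :=
  hF.comp (by fun_prop) fun _ hz => mk_mem_prod hx hz

variable [NormedSpace ℝ E]

theorem continuousOn_intervalIntegral_of_continuousOn_prod [FirstCountableTopology 𝓧] {K : Set 𝓧}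
    (hK : IsCompact K) {F : 𝓧 → ℝ → E}
    (hF : ContinuousOn (fun p : 𝓧 × ℝ => F p.1 p.2) (K ×ˢ uIcc a b)) :
    ContinuousOn (fun x => ∫ z in a..b, F x z) K := by
  obtain ⟨C, hC⟩ := (hK.prod isCompact_uIcc).exists_bound_of_continuousOn hF
  intro x₀ hx₀
  refine intervalIntegral.continuousWithinAt_of_dominated_interval (bound := fun _ => C)
    ?_ ?_ intervalIntegrable_const (ae_of_all _ fun z hz => ?_)
  · filter_upwards [self_mem_nhdsWithin] with x hx
    exact (continuousOn_slice_of_continuousOn_prod hF hx).mono uIoc_subset_uIcc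
      |>.aestronglyMeasurable measurableSet_uIoc
  · filter_upwards [self_mem_nhdsWithin] with x hx
    exact ae_of_all _ fun z hz => hC (x, z) ⟨hx, uIoc_subset_uIcc hz⟩
  · exact hF.comp (by fun_prop) (fun x hx => mk_mem_prod hx (uIoc_subset_uIcc hz)) x₀ hx₀

theorem hasDerivAt_intervalIntegral_of_continuousOn_prod {K : Set ℝ} (hK : IsCompact K)
    {F F' : ℝ → ℝ → E} (hF : ContinuousOn (fun p : ℝ × ℝ => F p.1 p.2) (K ×ˢ uIcc a b))
    (hF' : ContinuousOn (fun p : ℝ × ℝ => F' p.1 p.2) (K ×ˢ uIcc a b))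
    (h_deriv : ∀ t ∈ K, ∀ z ∈ uIcc a b, HasDerivWithinAt (F · z) (F' t z) K t)
    {t : ℝ} (ht : t ∈ interior K) :
    HasDerivAt (fun t => ∫ z in a..b, F t z) (∫ z in a..b, F' t z) t := by
  obtain ⟨C, hC⟩ := (hK.prod isCompact_uIcc).exists_bound_of_continuousOn hF'
  have h_nhds : interior K ∈ nhds t := isOpen_interior.mem_nhds ht
  have slice_meas {G : ℝ → ℝ → E} (hG : ContinuousOn (fun p : ℝ × ℝ => G p.1 p.2) (K ×ˢ uIcc a b))
      {s : ℝ} (hs : s ∈ interior K) : AEStronglyMeasurable (G s) (volume.restrict (uIoc a b)) :=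
    (continuousOn_slice_of_continuousOn_prod hG (interior_subset hs)).mono uIoc_subset_uIcc
      |>.aestronglyMeasurable measurableSet_uIoc
  refine (intervalIntegral.hasDerivAt_integral_of_dominated_loc_of_deriv_le h_nhds
    (Filter.mem_of_superset h_nhds fun s hs => slice_meas hF hs)
    (continuousOn_slice_of_continuousOn_prod hF (interior_subset ht)).intervalIntegrable
    (slice_meas hF' ht) (bound := fun _ => C)
    (ae_of_all _ fun z hz s hs => hC (s, z) ⟨interior_subset hs, uIoc_subset_uIcc hz⟩)
    intervalIntegrable_const (ae_of_all _ fun z hz s hs => ?_)).2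
  exact (h_deriv s (interior_subset hs) z (uIoc_subset_uIcc hz)).hasDerivAt
    (mem_interior_iff_mem_nhds.1 hs)

end ParametricIntegral

section BalanceLaw

theorem le_exp_mul_add_integral_of_deriv_le {T α : ℝ} (hT : 0 ≤ T) (hα : 0 ≤ α) {E E' ρ : ℝ → ℝ}
    (hE : ContinuousOn E (Icc 0 T)) (h_deriv : ∀ t ∈ Ioo 0 T, HasDerivAt E (E' t) t)
    (hρ : ContinuousOn ρ (Icc 0 T)) (hρ_nonneg : ∀ t ∈ Ioo 0 T, 0 ≤ ρ t)
    (h_le : ∀ t ∈ Ioo 0 T, E' t ≤ -α * E t + ρ t) :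
    E T ≤ Real.exp (-α * T) * E 0 + ∫ t in (0 : ℝ)..T, ρ t := by
  have h_weighted : Real.exp (α * T) * E T - Real.exp (α * 0) * E 0 ≤
      ∫ t in (0 : ℝ)..T, Real.exp (α * T) * ρ t := by
    refine intervalIntegral.sub_le_integral_of_hasDeriv_right_of_le
      (g := fun t => Real.exp (α * t) * E t)
      (g' := fun t => Real.exp (α * t) * α * E t + Real.exp (α * t) * E' t) hT
      (ContinuousOn.mul (by fun_prop) hE) (fun t ht => ?_)
      (hρ.const_mul _).integrableOn_Icc fun t ht => ?_
    · exact ((hasDerivAt_const_mul α).exp.mul (h_deriv t ht)).hasDerivWithinAt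
    · calc Real.exp (α * t) * α * E t + Real.exp (α * t) * E' t
          ≤ Real.exp (α * t) * ρ t := by nlinarith [h_le t ht, Real.exp_pos (α * t)]
        _ ≤ Real.exp (α * T) * ρ t := by
          gcongr
          exacts [hρ_nonneg t ht, ht.2.le]
  rw [intervalIntegral.integral_const_mul, mul_zero, Real.exp_zero, one_mul] at h_weighted
  rw [neg_mul, Real.exp_neg, ← div_eq_inv_mul, ← sub_le_iff_le_add, le_div_iff₀' (Real.exp_pos _),
    mul_sub]
  linarith

theorem integral_le_exp_mul_integral_add_of_balance_law {T α a b : ℝ} (hT : 0 ≤ T) (hα : 0 ≤ α)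
    (hab : a ≤ b) {e eₜ f f_z r : ℝ → ℝ → ℝ}
    (he : ContinuousOn (fun p : ℝ × ℝ => e p.1 p.2) (Icc 0 T ×ˢ Icc a b))
    (heₜ : ContinuousOn (fun p : ℝ × ℝ => eₜ p.1 p.2) (Icc 0 T ×ˢ Icc a b))
    (hr : ContinuousOn (fun p : ℝ × ℝ => r p.1 p.2) (Icc 0 T ×ˢ Icc a b))
    (hr_nonneg : ∀ t ∈ Icc 0 T, ∀ z ∈ Icc a b, 0 ≤ r t z)
    (h_time : ∀ t ∈ Icc 0 T, ∀ z ∈ Icc a b, HasDerivWithinAt (e · z) (eₜ t z) (Icc 0 T) t)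
    (h_space : ∀ t ∈ Icc 0 T, ∀ z ∈ Icc a b, HasDerivWithinAt (f t) (f_z t z) (Icc a b) z)
    (h_flux : ∀ t ∈ Icc 0 T, f t a ≤ f t b)
    (h_balance : ∀ t ∈ Icc 0 T, ∀ z ∈ Icc a b, eₜ t z + f_z t z ≤ -α * e t z + r t z) :
    ∫ z in a..b, e T z ≤
      Real.exp (-α * T) * (∫ z in a..b, e 0 z) + ∫ t in (0 : ℝ)..T, ∫ z in a..b, r t z := by
  rw [← uIcc_of_le hab] at he heₜ hr h_time
  have slice_integrable {g : ℝ → ℝ → ℝ}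
      (hg : ContinuousOn (fun p : ℝ × ℝ => g p.1 p.2) (Icc 0 T ×ˢ uIcc a b)) {t : ℝ}
      (ht : t ∈ Icc 0 T) : IntervalIntegrable (g t) MeasureTheory.volume a b :=
    (continuousOn_slice_of_continuousOn_prod hg ht).intervalIntegrable
  refine le_exp_mul_add_integral_of_deriv_le hT hα (E := fun t => ∫ z in a..b, e t z)
    (E' := fun t => ∫ z in a..b, eₜ t z)
    (continuousOn_intervalIntegral_of_continuousOn_prod isCompact_Icc he)
    (fun t ht => hasDerivAt_intervalIntegral_of_continuousOn_prod isCompact_Icc he heₜ h_time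
      (by rwa [interior_Icc]))
    (continuousOn_intervalIntegral_of_continuousOn_prod isCompact_Icc hr) (fun t ht => ?_)
    fun t ht => ?_
  · exact intervalIntegral.integral_nonneg hab (hr_nonneg t (Ioo_subset_Icc_self ht))
  replace ht := Ioo_subset_Icc_self ht
  have h_decay_int := (slice_integrable he ht).const_mul (-α)
  have h_source_int := h_decay_int.add (slice_integrable hr ht)
  have h_net_flux : f t b - f t a ≤ ∫ z in a..b, (-α * e t z + r t z - eₜ t z) := by
    refine intervalIntegral.sub_le_integral_of_hasDeriv_right_of_le (g' := f_z t) hab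
      (fun z hz => (h_space t ht z hz).continuousWithinAt) (fun z hz => ?_) ?_ fun z hz => ?_
    · exact ((h_space t ht z (Ioo_subset_Icc_self hz)).hasDerivAt
        (Icc_mem_nhds hz.1 hz.2)).hasDerivWithinAt
    · exact (intervalIntegrable_iff_integrableOn_Icc_of_le hab).1
        (h_source_int.sub (slice_integrable heₜ ht))
    · linarith [h_balance t ht z (Ioo_subset_Icc_self hz)]
  rw [intervalIntegral.integral_sub h_source_int (slice_integrable heₜ ht),
    intervalIntegral.integral_add h_decay_int (slice_integrable hr ht),
    intervalIntegral.integral_const_mul] at h_net_flux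
  linarith [h_flux t ht]

end BalanceLaw

section SquareRoot

theorem sqrt_add_le_sqrt_add_sqrt {x y : ℝ} (hx : 0 ≤ x) (hy : 0 ≤ y) : √(x + y) ≤ √x + √y := by
  simpa only [Real.sqrt_eq_rpow] using
    Real.rpow_add_le_add_rpow hx hy one_half_pos.le one_half_lt_one.le

theorem sqrt_le_of_le_mul_exp_mul_add {a a₀ D M m μ α t : ℝ} (ha₀ : 0 ≤ a₀) (hD : 0 ≤ D)
    (hM : 0 ≤ M) (hm : 0 ≤ m)
    (h : a ≤ M * Real.exp μ * (Real.exp (-α * t) * (m⁻¹ * a₀) + D)) :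
    √a ≤ √(M / m) * Real.exp (μ / 2) * Real.exp (-(α / 2) * t) * √a₀ +
      √M * Real.exp (μ / 2) * √D := by
  have hMm : 0 ≤ M / m := div_nonneg hM hm
  calc √a ≤ √(M / m * Real.exp μ * Real.exp (-α * t) * a₀ + M * Real.exp μ * D) :=
        Real.sqrt_le_sqrt (h.trans_eq (by ring))
    _ ≤ √(M / m * Real.exp μ * Real.exp (-α * t) * a₀) + √(M * Real.exp μ * D) :=
        sqrt_add_le_sqrt_add_sqrt (by positivity) (by positivity)
    _ = _ := by
        rw [show -(α / 2) * t = -α * t / 2 by ring, Real.exp_half, Real.exp_half,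
          ← Real.sqrt_mul hMm, ← Real.sqrt_mul (by positivity), ← Real.sqrt_mul (by positivity),
          ← Real.sqrt_mul hM, ← Real.sqrt_mul (by positivity)]

end SquareRoot

section Lyapunov

theorem hasDerivWithinAt_dotProduct_mulVec_self {P : Matrix ι ι ℝ} (hP : P.IsSymm)
    {x : ℝ → ι → ℝ} {x' : ι → ℝ} {s : Set ℝ} {t : ℝ} (hx : HasDerivWithinAt x x' s t) :
    HasDerivWithinAt (fun t => x t ⬝ᵥ P *ᵥ x t) (2 * (x t ⬝ᵥ P *ᵥ x')) s t := by
  have h_mulVec : HasDerivWithinAt (fun t => P *ᵥ x t) (P *ᵥ x') s t :=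
    P.mulVecLin.toContinuousLinearMap.hasFDerivAt.comp_hasDerivWithinAt t hx
  have h_sum := HasDerivWithinAt.fun_sum (u := Finset.univ) fun i _ =>
    (hasDerivWithinAt_pi.1 hx i).mul (hasDerivWithinAt_pi.1 h_mulVec i)
  refine h_sum.congr_deriv ?_
  rw [Finset.sum_add_distrib, two_mul]
  congr 1
  exact dotProduct_mulVec_comm_of_isSymm hP x' (x t)

/-- `X`, with partial derivatives `Xt` and `Xz`, is a classical solution of
`∂ₜX + Λ ∂_zX = N d` on `[0, T] × [0, 1]`, with one-sided derivatives at the ends. Continuity is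
asked of `X`, `Xt` and `d` but not of `Xz`, and boundary conditions are stated separately. -/
structure IsClassicalSolution (Λ : Matrix ι ι ℝ) (N : Matrix ι η ℝ) (T : ℝ)
    (X Xt Xz : ℝ → ℝ → ι → ℝ) (d : ℝ → ℝ → η → ℝ) : Prop where
  continuousOn : ContinuousOn (fun p : ℝ × ℝ => X p.1 p.2) (Icc 0 T ×ˢ Icc 0 1)
  continuousOn_timeDeriv : ContinuousOn (fun p : ℝ × ℝ => Xt p.1 p.2) (Icc 0 T ×ˢ Icc 0 1)
  continuousOn_disturbance : ContinuousOn (fun p : ℝ × ℝ => d p.1 p.2) (Icc 0 T ×ˢ Icc 0 1)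
  hasDerivWithinAt_time : ∀ t ∈ Icc 0 T, ∀ z ∈ Icc (0 : ℝ) 1,
    HasDerivWithinAt (X · z) (Xt t z) (Icc 0 T) t
  hasDerivWithinAt_space : ∀ t ∈ Icc 0 T, ∀ z ∈ Icc (0 : ℝ) 1,
    HasDerivWithinAt (X t) (Xz t z) (Icc 0 1) z
  pde : ∀ t ∈ Icc 0 T, ∀ z ∈ Icc (0 : ℝ) 1, Xt t z + Λ *ᵥ Xz t z = N *ᵥ d t z

theorem IsClassicalSolution.mono {Λ : Matrix ι ι ℝ} {N : Matrix ι η ℝ} {T T' : ℝ}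
    {X Xt Xz : ℝ → ℝ → ι → ℝ} {d : ℝ → ℝ → η → ℝ} (hX : IsClassicalSolution Λ N T X Xt Xz d)
    (hT : T' ≤ T) : IsClassicalSolution Λ N T' X Xt Xz d where
  continuousOn := hX.continuousOn.mono (by gcongr)
  continuousOn_timeDeriv := hX.continuousOn_timeDeriv.mono (by gcongr)
  continuousOn_disturbance := hX.continuousOn_disturbance.mono (by gcongr)
  hasDerivWithinAt_time t ht z hz :=
    (hX.hasDerivWithinAt_time t (Icc_subset_Icc_right hT ht) z hz).mono (Icc_subset_Icc_right hT)
  hasDerivWithinAt_space t ht := hX.hasDerivWithinAt_space t (Icc_subset_Icc_right hT ht)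
  pde t ht := hX.pde t (Icc_subset_Icc_right hT ht)

/-- The Lyapunov functional `φ ↦ ∫₀¹ e^{-μz} φ(z)ᵀ P φ(z) dz`. -/
noncomputable def lyapunovFunctional (μ : ℝ) (P : Matrix ι ι ℝ) (φ : ℝ → ι → ℝ) : ℝ :=
  ∫ z in (0 : ℝ)..1, Real.exp (-μ * z) * (φ z ⬝ᵥ P *ᵥ φ z)

variable {μ : ℝ} {P : Matrix ι ι ℝ}

theorem lyapunovFunctional_le_mul_integral (hμ : 0 ≤ μ) {c : ℝ} (hc : 0 ≤ c)
    (hP : ∀ x, x ⬝ᵥ P *ᵥ x ≤ c * (x ⬝ᵥ x)) {φ : ℝ → ι → ℝ} (hφ : ContinuousOn φ (Icc 0 1)) :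
    lyapunovFunctional μ P φ ≤ c * ∫ z in (0 : ℝ)..1, φ z ⬝ᵥ φ z := by
  rw [lyapunovFunctional, ← intervalIntegral.integral_const_mul]
  refine intervalIntegral.integral_mono_on zero_le_one
    (ContinuousOn.intervalIntegrable_of_Icc zero_le_one (by fun_prop))
    (ContinuousOn.intervalIntegrable_of_Icc zero_le_one (by fun_prop)) fun z hz => ?_
  have h_exp : Real.exp (-μ * z) ≤ 1 := Real.exp_le_one_iff.2 (by nlinarith [hz.1])
  have h_nonneg : 0 ≤ c * (φ z ⬝ᵥ φ z) := mul_nonneg hc (dotProduct_self_nonneg _)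
  exact (mul_le_mul_of_nonneg_left (hP (φ z)) (Real.exp_pos _).le).trans
    (mul_le_of_le_one_left h_nonneg h_exp)

theorem integral_le_mul_lyapunovFunctional (hμ : 0 ≤ μ) {M : ℝ}
    (hP : ∀ x, x ⬝ᵥ x ≤ M * (x ⬝ᵥ P *ᵥ x)) {φ : ℝ → ι → ℝ} (hφ : ContinuousOn φ (Icc 0 1)) :
    ∫ z in (0 : ℝ)..1, φ z ⬝ᵥ φ z ≤ M * Real.exp μ * lyapunovFunctional μ P φ := by
  rw [lyapunovFunctional, ← intervalIntegral.integral_const_mul]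
  refine intervalIntegral.integral_mono_on zero_le_one
    (ContinuousOn.intervalIntegrable_of_Icc zero_le_one (by fun_prop))
    (ContinuousOn.intervalIntegrable_of_Icc zero_le_one (by fun_prop)) fun z hz => ?_
  have h_nonneg : 0 ≤ M * (φ z ⬝ᵥ P *ᵥ φ z) := (dotProduct_self_nonneg _).trans (hP (φ z))
  calc φ z ⬝ᵥ φ z ≤ M * (φ z ⬝ᵥ P *ᵥ φ z) := hP (φ z)
    _ ≤ Real.exp (μ + -μ * z) * (M * (φ z ⬝ᵥ P *ᵥ φ z)) :=
        le_mul_of_one_le_left h_nonneg (Real.one_le_exp (by nlinarith [hz.2]))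
    _ = M * Real.exp μ * (Real.exp (-μ * z) * (φ z ⬝ᵥ P *ᵥ φ z)) := by rw [Real.exp_add]; ring

theorem IsClassicalSolution.lyapunovFunctional_le {Λ : Matrix ι ι ℝ} {N : Matrix ι η ℝ} {T α : ℝ}
    {X Xt Xz : ℝ → ℝ → ι → ℝ} {d : ℝ → ℝ → η → ℝ} (hX : IsClassicalSolution Λ N T X Xt Xz d)
    (hT : 0 ≤ T) (hμ : 0 ≤ μ) (hα : 0 ≤ α) (hΛ : Λ.IsSymm) (hP : P.IsSymm) (h_comm : Commute Λ P)
    (h_supply : ∀ x v, 2 * (x ⬝ᵥ P *ᵥ (N *ᵥ v)) ≤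
      μ * (x ⬝ᵥ (Λ * P) *ᵥ x) - α * (x ⬝ᵥ P *ᵥ x) + v ⬝ᵥ v)
    (h_flux : ∀ t ∈ Icc 0 T,
      X t 0 ⬝ᵥ (Λ * P) *ᵥ X t 0 ≤ Real.exp (-μ) * (X t 1 ⬝ᵥ (Λ * P) *ᵥ X t 1)) :
    lyapunovFunctional μ P (X T) ≤ Real.exp (-α * T) * lyapunovFunctional μ P (X 0) +
      ∫ t in (0 : ℝ)..T, ∫ z in (0 : ℝ)..1, d t z ⬝ᵥ d t z := by
  have h_cont := hX.continuousOn
  have h_cont_time := hX.continuousOn_timeDeriv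
  have h_cont_dist := hX.continuousOn_disturbance
  have hΛP : (Λ * P).IsSymm := by rw [IsSymm, transpose_mul, hΛ.eq, hP.eq, h_comm.eq]
  refine integral_le_exp_mul_integral_add_of_balance_law hT hα zero_le_one
    (e := fun t z => Real.exp (-μ * z) * (X t z ⬝ᵥ P *ᵥ X t z))
    (eₜ := fun t z => Real.exp (-μ * z) * (2 * (X t z ⬝ᵥ P *ᵥ Xt t z)))
    (f := fun t z => Real.exp (-μ * z) * (X t z ⬝ᵥ (Λ * P) *ᵥ X t z))
    (f_z := fun t z => Real.exp (-μ * z) * -μ * (X t z ⬝ᵥ (Λ * P) *ᵥ X t z) +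
      Real.exp (-μ * z) * (2 * (X t z ⬝ᵥ (Λ * P) *ᵥ Xz t z)))
    (r := fun t z => d t z ⬝ᵥ d t z)
    (by fun_prop) (by fun_prop) (by fun_prop) (fun t _ z _ => dotProduct_self_nonneg (d t z))
    (fun t ht z hz => ?_) (fun t ht z hz => ?_) (fun t ht => ?_) fun t ht z hz => ?_
  · exact (hasDerivWithinAt_dotProduct_mulVec_self hP
      (hX.hasDerivWithinAt_time t ht z hz)).const_mul _
  · exact (hasDerivAt_const_mul (-μ)).exp.hasDerivWithinAt.mul
      (hasDerivWithinAt_dotProduct_mulVec_self hΛP (hX.hasDerivWithinAt_space t ht z hz))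
  · simpa using h_flux t ht
  · have h_exp_le : Real.exp (-μ * z) ≤ 1 := Real.exp_le_one_iff.2 (by nlinarith [hz.1])
    have h_transport : X t z ⬝ᵥ P *ᵥ Xt t z + X t z ⬝ᵥ (Λ * P) *ᵥ Xz t z =
        X t z ⬝ᵥ P *ᵥ (N *ᵥ d t z) := by
      rw [h_comm.eq, ← mulVec_mulVec, ← dotProduct_add, ← mulVec_add, hX.pde t ht z hz]
    have h_weighted := mul_le_mul_of_nonneg_left (h_supply (X t z) (d t z))
      (Real.exp_pos (-μ * z)).le
    rw [← h_transport] at h_weighted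
    have h_dist := mul_le_of_le_one_left (dotProduct_self_nonneg (d t z)) h_exp_le
    linarith

theorem IsClassicalSolution.integral_dotProduct_self_le {Λ : Matrix ι ι ℝ} {N : Matrix ι η ℝ}
    {T α c M : ℝ} {X Xt Xz : ℝ → ℝ → ι → ℝ} {d : ℝ → ℝ → η → ℝ}
    (hX : IsClassicalSolution Λ N T X Xt Xz d) (hT : 0 ≤ T) (hμ : 0 ≤ μ) (hα : 0 ≤ α)
    (hc : 0 ≤ c) (hM : 0 ≤ M) (hΛ : Λ.IsSymm) (hP : P.IsSymm) (h_comm : Commute Λ P)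
    (hP_le : ∀ x, x ⬝ᵥ P *ᵥ x ≤ c * (x ⬝ᵥ x)) (h_le_P : ∀ x, x ⬝ᵥ x ≤ M * (x ⬝ᵥ P *ᵥ x))
    (h_supply : ∀ x v, 2 * (x ⬝ᵥ P *ᵥ (N *ᵥ v)) ≤
      μ * (x ⬝ᵥ (Λ * P) *ᵥ x) - α * (x ⬝ᵥ P *ᵥ x) + v ⬝ᵥ v)
    (h_flux : ∀ t ∈ Icc 0 T,
      X t 0 ⬝ᵥ (Λ * P) *ᵥ X t 0 ≤ Real.exp (-μ) * (X t 1 ⬝ᵥ (Λ * P) *ᵥ X t 1)) :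
    ∫ z in (0 : ℝ)..1, X T z ⬝ᵥ X T z ≤ M * Real.exp μ *
      (Real.exp (-α * T) * (c * ∫ z in (0 : ℝ)..1, X 0 z ⬝ᵥ X 0 z) +
        ∫ t in (0 : ℝ)..T, ∫ z in (0 : ℝ)..1, d t z ⬝ᵥ d t z) := by
  have continuousOn_slice {t : ℝ} (ht : t ∈ Icc 0 T) : ContinuousOn (X t) (Icc 0 1) :=
    continuousOn_slice_of_continuousOn_prod hX.continuousOn ht
  calc ∫ z in (0 : ℝ)..1, X T z ⬝ᵥ X T z ≤ M * Real.exp μ * lyapunovFunctional μ P (X T) :=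
        integral_le_mul_lyapunovFunctional hμ h_le_P (continuousOn_slice ⟨hT, le_rfl⟩)
    _ ≤ M * Real.exp μ * (Real.exp (-α * T) * lyapunovFunctional μ P (X 0) +
          ∫ t in (0 : ℝ)..T, ∫ z in (0 : ℝ)..1, d t z ⬝ᵥ d t z) := by
        gcongr
        exact hX.lyapunovFunctional_le hT hμ hα hΛ hP h_comm h_supply h_flux
    _ ≤ _ := by
        gcongr
        exact lyapunovFunctional_le_mul_integral hμ hc hP_le (continuousOn_slice ⟨le_rfl, hT⟩)

end Lyapunov

theorem corollary_ISS_design_general [DecidableEq ι] [DecidableEq η] {Λ Q H Γ : Matrix ι ι ℝ}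
    {B : Matrix ι κ ℝ} {N : Matrix ι η ℝ} {W : Matrix κ ι ℝ} {S : Matrix κ κ ℝ} {μ α T₀ : ℝ}
    (hΛ : Λ.PosDef) (hQ : Q.PosDef) (h_comm : Commute Λ Q) (hS : S.IsDiag)
    (hS_pos : ∀ i, 0 < S i i) (hμ : 0 ≤ μ) (hα : 0 ≤ α)
    (hD1 : (-boundaryMatrix Λ H Q B W S (Real.exp (-μ))).PosSemidef)
    (hD2 : (fromBlocks Γ N Nᵀ (1 : Matrix η η ℝ)).PosSemidef)
    (hD3 : (-(Q * (α • (1 : Matrix ι ι ℝ) - μ • Λ) + Γ)).PosSemidef)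
    {X Xt Xz : ℝ → ℝ → ι → ℝ} {d : ℝ → ℝ → η → ℝ} (hX : IsClassicalSolution Λ N T₀ X Xt Xz d)
    {w : ℝ → κ → ℝ} (hw : ∀ t ∈ Icc 0 T₀, ∀ i, w t i * (w t i + ((W * Q⁻¹) *ᵥ X t 1) i) ≤ 0)
    (hbc : ∀ t ∈ Icc 0 T₀, X t 0 = (H + B * (W * Q⁻¹)) *ᵥ X t 1 + B *ᵥ w t) {t : ℝ}
    (ht : t ∈ Icc 0 T₀) :
    √(∫ z in (0 : ℝ)..1, X t z ⬝ᵥ X t z) ≤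
      √((⨆ i, hQ.isHermitian.eigenvalues i) / (⨅ i, hQ.isHermitian.eigenvalues i)) *
            Real.exp (μ / 2) * Real.exp (-(α / 2) * t) * √(∫ z in (0 : ℝ)..1, X 0 z ⬝ᵥ X 0 z) +
        √(⨆ i, hQ.isHermitian.eigenvalues i) * Real.exp (μ / 2) *
          √(∫ θ in (0 : ℝ)..t, ∫ z in (0 : ℝ)..1, d θ z ⬝ᵥ d θ z) := by
  have h_sup := Real.iSup_nonneg fun i => (hQ.eigenvalues_pos i).le
  have h_inf := Real.iInf_nonneg fun i => (hQ.eigenvalues_pos i).le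
  have hΛ_symm : Λ.IsSymm := hΛ.isHermitian
  have h_comm_inv : Commute Λ Q⁻¹ := Matrix.zpow_neg_one Q ▸ Matrix.Commute.zpow_right h_comm (-1)
  refine sqrt_le_of_le_mul_exp_mul_add ?_ ?_ h_sup h_inf <|
    (hX.mono ht.2).integral_dotProduct_self_le ht.1 hμ hα (inv_nonneg.2 h_inf) h_sup hΛ_symm
      hQ.inv.isHermitian h_comm_inv (dotProduct_inv_mulVec_le hQ)
      (dotProduct_self_le_mul_dotProduct_inv_mulVec hQ)
      (dotProduct_interior_supply_le hQ.isHermitian hQ.isUnit hD2 hD3) fun s hs => ?_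
  · exact intervalIntegral.integral_nonneg zero_le_one fun z _ => dotProduct_self_nonneg (X 0 z)
  · exact intervalIntegral.integral_nonneg ht.1 fun θ _ =>
      intervalIntegral.integral_nonneg zero_le_one fun z _ => dotProduct_self_nonneg (d θ z)
  · replace hs := Icc_subset_Icc_right ht.2 hs
    exact dotProduct_boundary_flux_le hΛ_symm hΛ.isUnit hQ.isUnit hS hS_pos hD1 (hw s hs) (hbc s hs)

/-- Corollary 1 (classical-solution version): feasibility of the LMIs
(D1), (D2), (D3) yields, with `K = WQ⁻¹`, the ISS bound with gain `√λ_max(Q) e^{μ/2}`.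
Here `Q` is diagonal, so `λ_min(Q) = ⨅ i, Q i i` and `λ_max(Q) = ⨆ i, Q i i`. -/
theorem corollary_ISS_design {n m q : ℕ}
    (Λ : Matrix (Fin n) (Fin n) ℝ) (hΛdiag : Λ.IsDiag) (hΛpos : ∀ i, 0 < Λ i i)
    (H : Matrix (Fin n) (Fin n) ℝ) (B : Matrix (Fin n) (Fin m) ℝ)
    (N : Matrix (Fin n) (Fin q) ℝ)
    (ubar : Fin m → ℝ) (hubar : ∀ i, 0 < ubar i)
    (Q : Matrix (Fin n) (Fin n) ℝ) (hQdiag : Q.IsDiag) (hQpos : ∀ i, 0 < Q i i)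
    (S : Matrix (Fin m) (Fin m) ℝ) (hSdiag : S.IsDiag) (hSpos : ∀ i, 0 < S i i)
    (Γhat : Matrix (Fin n) (Fin n) ℝ) (hΓhatsymm : Γhat.IsSymm) (hΓhatpos : Γhat.PosDef)
    (μ α : ℝ) (hμ : 0 < μ) (hα : 0 < α)
    (W : Matrix (Fin m) (Fin n) ℝ)
    (hD1 : (-(Matrix.fromBlocks
        (Matrix.fromBlocks
          (-(Q * Λ⁻¹)) (H * Q + B * W)
          ((H * Q + B * W)ᵀ) (-(Real.exp (-μ) • (Λ * Q))))
        (Matrix.fromRows (B * S) (-Wᵀ))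
        (Matrix.fromCols ((B * S)ᵀ) (-W))
        (-(2 • S)))).PosSemidef)
    (hD2 : (Matrix.fromBlocks Γhat N Nᵀ (1 : Matrix (Fin q) (Fin q) ℝ)).PosSemidef)
    (hD3 : (-(Q * (α • (1 : Matrix (Fin n) (Fin n) ℝ) - μ • Λ) + Γhat)).PosSemidef)
    (T₀ : ℝ) (hT₀ : 0 < T₀)
    (X Xt Xz : ℝ → ℝ → Fin n → ℝ) (d : ℝ → ℝ → Fin q → ℝ)
    (hXcont : ContinuousOn (fun p : ℝ × ℝ => X p.1 p.2) (Icc 0 T₀ ×ˢ Icc (0:ℝ) 1))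
    (hXtcont : ContinuousOn (fun p : ℝ × ℝ => Xt p.1 p.2) (Icc 0 T₀ ×ˢ Icc (0:ℝ) 1))
    (hXzcont : ContinuousOn (fun p : ℝ × ℝ => Xz p.1 p.2) (Icc 0 T₀ ×ˢ Icc (0:ℝ) 1))
    (hXt : ∀ t ∈ Icc (0:ℝ) T₀, ∀ z ∈ Icc (0:ℝ) 1,
      HasDerivWithinAt (fun s => X s z) (Xt t z) (Icc (0:ℝ) T₀) t)
    (hXz : ∀ t ∈ Icc (0:ℝ) T₀, ∀ z ∈ Icc (0:ℝ) 1,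
      HasDerivWithinAt (fun w => X t w) (Xz t z) (Icc (0:ℝ) 1) z)
    (hdcont : ContinuousOn (fun p : ℝ × ℝ => d p.1 p.2) (Icc 0 T₀ ×ˢ Icc (0:ℝ) 1))
    (hpde : ∀ t ∈ Icc (0:ℝ) T₀, ∀ z ∈ Icc (0:ℝ) 1,
      Xt t z + Λ.mulVec (Xz t z) = N.mulVec (d t z))
    (hbc : ∀ t ∈ Icc (0:ℝ) T₀,
      X t 0 = (H + B * (W * Q⁻¹)).mulVec (X t 1) +
        B.mulVec (deadzone ubar ((W * Q⁻¹).mulVec (X t 1)))) :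
    ∀ t ∈ Icc (0:ℝ) T₀,
      Real.sqrt (∫ z in (0:ℝ)..1, enorm' (X t z) ^ 2) ≤
        Real.sqrt ((⨆ i, Q i i) / (⨅ i, Q i i)) * Real.exp (μ / 2) *
            Real.exp (-(α / 2) * t) * Real.sqrt (∫ z in (0:ℝ)..1, enorm' (X 0 z) ^ 2) +
          Real.sqrt (⨆ i, Q i i) * Real.exp (μ / 2) *
            Real.sqrt (∫ θ in (0:ℝ)..t, ∫ z in (0:ℝ)..1, enorm' (d θ z) ^ 2) := by
  have hQ := posDef_of_isDiag hQdiag hQpos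
  simpa only [enorm'_sq, iSup, iInf, range_eigenvalues_of_isDiag hQ.isHermitian hQdiag] using
    fun t => corollary_ISS_design_general (posDef_of_isDiag hΛdiag hΛpos) hQ
      (commute_of_isDiag hΛdiag hQdiag) hSdiag hSpos hμ.le hα.le hD1 hD2 hD3
      ⟨hXcont, hXtcont, hdcont, hXt, hXz, hpde⟩
      (fun t _ i => deadzone_mul_deadzone_add_self_nonpos (hubar i).le _) hbc
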